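/- Let H be a Hopf algebra over a field k, let I be a left coideal of H, and let M be a Hopf subalgebra of H (a subalgebra with Δ(M) ⊆ M ⊗ M and σ(M) ⊆ M). Then the k-span of { (ad a)b : a ∈ M, b ∈ I }, where (ad a)b = Σ a₍₁₎ b σ(a₍₂₎), is a left coideal of H which is invariant under the adjoint action of M: applying ad m for any m ∈ M maps this span into itself. -/

import Mathlib

open TensorProduct

/-- `I` is a left coideal of `H` over `k`: `Δ(I) ⊆ H ⊗ I`. -/
def IsLeftCoideal (k : Type*) {H : Type*} [CommSemiring k] [AddCommMonoid H] [Module k H]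
    [CoalgebraStruct k H] (I : Submodule k H) : Prop :=
  ∀ x ∈ I, Coalgebra.comul (R := k) x ∈
    LinearMap.range (TensorProduct.map (LinearMap.id : H →ₗ[k] H) I.subtype)

/-- The left adjoint action `(ad a) b = Σ a₍₁₎ b σ(a₍₂₎)` of a Hopf algebra on itself. -/
noncomputable def hopfAd (k : Type*) {H : Type*} [Field k] [Ring H] [HopfAlgebra k H]
    (a b : H) : H :=
  LinearMap.mul' k H
    (TensorProduct.map (LinearMap.mulRight k b) (HopfAlgebra.antipode (R := k))
      (Coalgebra.comul (R := k) a))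

/-!
For an algebra homomorphism `f : H → A`, the map `a ↦ Σ f(a₍₁₎) x f(σ(a₍₂₎))` is the conjugate
`f x f⁻¹` in the convolution algebra `Hom(H, A)`, where `x` stands for the map `a ↦ ε(a) x` and
`f⁻¹ = f ∘ σ`. Hence `a ↦ Δ((ad a) b)` is the conjugate of `Δ(b)` by `Δ`. Since `Δ = i₁ * i₂` for
the two inclusions `i₁, i₂ : H → H ⊗ H`, and conjugating by `i₂` applies the adjoint action to the
second tensor factor, only `i₁` remains, and it multiplies the first tensor factor alone.
-/

open Algebra.TensorProduct Coalgebra HopfAlgebra WithConv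

section LeftTensor

variable {R : Type*} [CommSemiring R]

/-- The image of `U ⊗ I` in `U ⊗ V`, for a submodule `I` of `V`. It is written as a range so that
`Δ(I) ⊆ H ⊗ I` is definitionally `IsLeftCoideal R I`. -/
def leftTensor (U : Type*) {V : Type*} [AddCommMonoid U] [AddCommMonoid V] [Module R U]
    [Module R V] (I : Submodule R V) : Submodule R (U ⊗[R] V) :=
  LinearMap.range (TensorProduct.map LinearMap.id I.subtype)

lemma map_mem_leftTensor {U V W X : Type*} [AddCommMonoid U] [AddCommMonoid V] [AddCommMonoid W]
    [AddCommMonoid X] [Module R U] [Module R V] [Module R W] [Module R X] (f : U →ₗ[R] W)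
    {g : V →ₗ[R] X} {I : Submodule R V} {J : Submodule R X} (hg : I ≤ J.comap g) {t : U ⊗[R] V}
    (ht : t ∈ leftTensor U I) : TensorProduct.map f g t ∈ leftTensor W J := by
  obtain ⟨s, rfl⟩ := ht
  refine ⟨TensorProduct.map f (g.restrict hg) s, ?_⟩
  rw [TensorProduct.map_map, TensorProduct.map_map]
  rfl

variable {A B : Type*} [Semiring A] [Algebra R A] [Semiring B] [Algebra R B] {I : Submodule R B}
  {t : A ⊗[R] B}

lemma tmul_one_mul_mem_leftTensor (u : A) (ht : t ∈ leftTensor A I) :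
    u ⊗ₜ[R] 1 * t ∈ leftTensor A I := by
  rw [← LinearMap.mulLeft_apply (R := R), LinearMap.mulLeft_tmul, LinearMap.mulLeft_one]
  exact map_mem_leftTensor _ le_rfl ht

lemma mul_tmul_one_mem_leftTensor (u : A) (ht : t ∈ leftTensor A I) :
    t * u ⊗ₜ[R] 1 ∈ leftTensor A I := by
  rw [← LinearMap.mulRight_apply (R := R), LinearMap.mulRight_tmul, LinearMap.mulRight_one]
  exact map_mem_leftTensor _ le_rfl ht

end LeftTensor

section Convolution

variable {R C A : Type*} [CommSemiring R] [AddCommMonoid C] [Module R C] [Semiring A] [Algebra R A]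

variable (R) in
/-- `M` is a subcoalgebra of `C` over `R`: `Δ(M) ⊆ M ⊗ M`. -/
def IsSubcoalgebra [CoalgebraStruct R C] (M : Submodule R C) : Prop :=
  ∀ m ∈ M, comul (R := R) m ∈ LinearMap.range (TensorProduct.map M.subtype M.subtype)

lemma IsSubcoalgebra.convMul_mem [CoalgebraStruct R C] {M : Submodule R C}
    (hM : IsSubcoalgebra R M) {f g : WithConv (C →ₗ[R] A)} {P : Submodule R A}
    (hfg : ∀ m ∈ M, ∀ n ∈ M, f m * g n ∈ P) {a : C} (ha : a ∈ M) : (f * g) a ∈ P := by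
  obtain ⟨t, ht⟩ := hM a ha
  rw [LinearMap.convMul_apply, ← ht]
  clear ht
  induction t with
  | zero => simp only [map_zero, zero_mem]
  | add s t hs ht => simpa only [map_add] using add_mem hs ht
  | tmul m n => exact hfg m m.2 n n.2

variable (R C) in
/-- The map `c ↦ ε(c) x`, which is `x` regarded as a constant of the convolution algebra
`Hom(C, A)`. -/
noncomputable def convConst [CoalgebraStruct R C] (x : A) : WithConv (C →ₗ[R] A) :=
  toConv (LinearMap.toSpanSingleton R A x ∘ₗ counit)

lemma convMul_convConst [Coalgebra R C] (f : WithConv (C →ₗ[R] A)) (x : A) :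
    f * convConst R C x = toConv (LinearMap.mulRight R x ∘ₗ f.ofConv) := by
  ext c
  rw [LinearMap.convMul_apply, convConst, ofConv_toConv, ← LinearMap.map_comp_lTensor,
    LinearMap.comp_apply, lTensor_counit_comul]
  simp

end Convolution

section Adjoint

variable {R H A : Type*} [CommSemiring R] [Semiring H] [HopfAlgebra R H] [Semiring A] [Algebra R A]

/-- An algebra homomorphism `f` out of a Hopf algebra as a unit of the convolution algebra, with
inverse `f ∘ σ`. -/
noncomputable def convUnit (f : H →ₐ[R] A) : (WithConv (H →ₗ[R] A))ˣ where
  val := toConv f.toLinearMap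
  inv := toConv (f.toLinearMap ∘ₗ antipode R)
  val_inv := by
    ext a
    simpa [(ℛ R a).convMul_apply] using
      congrArg f (sum_mul_antipode_eq_algebraMap_counit (ℛ R a))
  inv_val := by
    ext a
    simpa [(ℛ R a).convMul_apply] using
      congrArg f (sum_antipode_mul_eq_algebraMap_counit (ℛ R a))

lemma convUnit_comulAlgHom :
    convUnit (Bialgebra.comulAlgHom R H) =
      convUnit (includeLeft (S := R)) * convUnit includeRight := by
  ext a
  simp [convUnit, (ℛ R a).convMul_apply, (ℛ R a).eq]

/-- The conjugate `f x f⁻¹` of the constant `x` by `f` in the convolution algebra: the map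
`a ↦ Σ f(a₍₁₎) x f(σ(a₍₂₎))`. -/
noncomputable def convConj (f : H →ₐ[R] A) (x : A) : WithConv (H →ₗ[R] A) :=
  convUnit f * convConst R H x * ↑(convUnit f)⁻¹

lemma convConj_apply (f : H →ₐ[R] A) (x : A) {a : H} {ι : Type*} (r : Coalgebra.Repr R a ι) :
    convConj f x a = ∑ i ∈ r.index, f (r.left i) * x * f (antipode R (r.right i)) := by
  rw [convConj, convMul_convConst, r.convMul_apply]
  rfl

variable (R H) in
/-- The left adjoint action `a ↦ (b ↦ Σ a₍₁₎ b σ(a₍₂₎))` as a representation of `H` on itself. -/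
noncomputable def adjointRep : H →ₐ[R] Module.End R H :=
  (AlgHom.mulLeftRight R H).comp <|
    (Algebra.TensorProduct.map (AlgHom.id R H) (antipodeAlgHomOp R H)).comp
      (Bialgebra.comulAlgHom R H)

lemma adjointRep_apply {a : H} (b : H) {ι : Type*} (r : Coalgebra.Repr R a ι) :
    adjointRep R H a b = ∑ i ∈ r.index, r.left i * b * antipode R (r.right i) := by
  simp [adjointRep, ← r.eq]

lemma algHom_adjointRep (f : H →ₐ[R] A) (a b : H) :
    f (adjointRep R H a b) = convConj f (f b) a := by
  simp [adjointRep_apply b (ℛ R a), convConj_apply f _ (ℛ R a)]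

lemma convConj_includeRight (t : A ⊗[R] H) (a : H) :
    convConj includeRight t a = TensorProduct.map LinearMap.id (adjointRep R H a) t := by
  rw [convConj_apply _ t (ℛ R a)]
  induction t with
  | zero => simp
  | add s t hs ht => simp only [mul_add, add_mul, Finset.sum_add_distrib, map_add, hs, ht]
  | tmul x y => simp [adjointRep_apply y (ℛ R a), TensorProduct.tmul_sum]

/-- That is, `Δ((ad a) b) = Σ (a₍₁₎ ⊗ 1) (id ⊗ ad a₍₂₎)(Δ(b)) (σ(a₍₃₎) ⊗ 1)`. -/
lemma comul_adjointRep (a b : H) :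
    comul (R := R) (adjointRep R H a b) =
      (convUnit (H := H) (A := H ⊗[R] H) (includeLeft (S := R)) *
          convConj includeRight (comul (R := R) b) *
        ((convUnit (H := H) (A := H ⊗[R] H) (includeLeft (S := R)))⁻¹ : _ˣ)) a := by
  have h := algHom_adjointRep (Bialgebra.comulAlgHom R H) a b
  rw [convConj, convUnit_comulAlgHom, mul_inv_rev, Units.val_mul, Units.val_mul] at h
  simpa only [convConj, mul_assoc, Bialgebra.comulAlgHom_apply] using h

/-- The span `(ad M) I` of all `(ad a) b` with `a ∈ M` and `b ∈ I`, as the image of `M` and `I`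
under the bilinear map `adjointRep`. -/
noncomputable def adjointSpan (M I : Submodule R H) : Submodule R H :=
  Submodule.map₂ (adjointRep R H).toLinearMap M I

lemma adjointRep_mem_adjointSpan {M I : Submodule R H} {a b : H} (ha : a ∈ M) (hb : b ∈ I) :
    adjointRep R H a b ∈ adjointSpan M I :=
  Submodule.apply_mem_map₂ _ ha hb

lemma adjointSpan_le {M I J : Submodule R H} :
    adjointSpan M I ≤ J ↔ ∀ a ∈ M, ∀ b ∈ I, adjointRep R H a b ∈ J :=
  Submodule.map₂_le

theorem adjointSpan_le_comap_adjointRep {M I : Submodule R H} (hM : M * M ≤ M) {m : H}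
    (hm : m ∈ M) : adjointSpan M I ≤ (adjointSpan M I).comap (adjointRep R H m) := by
  refine adjointSpan_le.2 fun a ha b hb ↦ ?_
  rw [Submodule.mem_comap, ← Module.End.mul_apply, ← map_mul]
  exact adjointRep_mem_adjointSpan (hM (Submodule.mul_mem_mul hm ha)) hb

theorem isLeftCoideal_adjointSpan {M I : Submodule R H} (hM : IsSubcoalgebra R M)
    (hI : IsLeftCoideal R I) : IsLeftCoideal R (adjointSpan M I) := by
  suffices adjointSpan M I ≤ (leftTensor H (adjointSpan M I)).comap (comul (R := R)) from this
  refine adjointSpan_le.2 fun a ha b hb ↦ ?_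
  rw [Submodule.mem_comap, comul_adjointRep]
  refine hM.convMul_mem (fun l hl n _ ↦ mul_tmul_one_mem_leftTensor (antipode R n) ?_) ha
  refine hM.convMul_mem (fun p _ q hq ↦ tmul_one_mul_mem_leftTensor p ?_) hl
  rw [convConj_includeRight]
  have hIM : I ≤ (adjointSpan M I).comap (adjointRep R H q) := fun _ hc ↦
    Submodule.mem_comap.2 (adjointRep_mem_adjointSpan hq hc)
  exact map_mem_leftTensor _ hIM (hI b hb)

end Adjoint

section HopfAd

variable {k H : Type*} [Field k] [Ring H] [HopfAlgebra k H]

lemma adjointRep_eq_hopfAd (a b : H) : adjointRep k H a b = hopfAd k a b := by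
  simp [adjointRep_apply b (ℛ k a), hopfAd, ← (ℛ k a).eq]

lemma adjointSpan_eq_span (M I : Submodule k H) :
    adjointSpan M I = Submodule.span k {x | ∃ a ∈ M, ∃ b ∈ I, x = hopfAd k a b} := by
  simp [adjointSpan, Submodule.map₂_eq_span_image2, Set.image2, adjointRep_eq_hopfAd, eq_comm]

theorem adjoint_span_is_left_coideal_general (I : Submodule k H) (hI : IsLeftCoideal k I)
    (M : Submodule k H) (hMcomul : IsSubcoalgebra k M) (hMmul : M * M ≤ M)
    (J : Submodule k H)
    (hJ : J = Submodule.span k {x : H | ∃ a ∈ M, ∃ b ∈ I, x = hopfAd k a b}) :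
    IsLeftCoideal k J ∧ ∀ m ∈ M, ∀ x ∈ J, hopfAd k m x ∈ J := by
  rw [← adjointSpan_eq_span] at hJ
  subst hJ
  refine ⟨isLeftCoideal_adjointSpan hMcomul hI, fun m hm x hx ↦ ?_⟩
  rw [← adjointRep_eq_hopfAd]
  exact adjointSpan_le_comap_adjointRep hMmul hm hx

end HopfAd

/-- Lemma 1.2.  If `I` is a left coideal of a Hopf algebra `H` and `M` is a
Hopf subalgebra of `H`, then the span of `(ad M) I` is an `ad M`-invariant left coideal. -/
theorem adjoint_span_is_left_coideal
    {k H : Type*} [Field k] [Ring H] [HopfAlgebra k H]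
    (I : Submodule k H) (hI : IsLeftCoideal k I)
    (M : Subalgebra k H)
    (hMcomul : ∀ m ∈ M, Coalgebra.comul (R := k) m ∈
      LinearMap.range (TensorProduct.map (Subalgebra.toSubmodule M).subtype
        (Subalgebra.toSubmodule M).subtype))
    (hMantipode : ∀ m ∈ M, HopfAlgebra.antipode (R := k) m ∈ M)
    (J : Submodule k H)
    (hJ : J = Submodule.span k {x : H | ∃ a ∈ M, ∃ b ∈ I, x = hopfAd k a b}) :
    IsLeftCoideal k J ∧ ∀ m ∈ M, ∀ x ∈ J, hopfAd k m x ∈ J := by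
  exact adjoint_span_is_left_coideal_general I hI (Subalgebra.toSubmodule M) hMcomul
    (Subalgebra.isIdempotentElem_toSubmodule M).le J hJ
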